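/- arXiv:1109.2860 — 2 statements merged into one kernel-verified Lean document; each statement's English description precedes it below -/
import Mathlib

section
/- Let p be an odd prime and let ζ be a primitive p-th root of unity in the p-th cyclotomic field over ℚ. Then the field norm from ℚ(ζ) to ℚ of 1 − ζ − ζ² equals the p-th Lucas number L(p). -/
/-!
Write `1 - x - x ^ 2 = (1 - a * x) * (1 - b * x)` with `a + b = 1` and `a * b = -1`. The conjugates
of `ζ` are the nontrivial `p`-th roots of unity, so `(1 - a) * ∏ σ, (1 - σ ζ * a) = 1 - a ^ p`, and
likewise for `b`. As `(1 - a) * (1 - b) = -1`, the norm is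
`-(1 - a ^ p) * (1 - b ^ p) = a ^ p + b ^ p - 1 - (-1) ^ p`, and `a ^ p + b ^ p` is the Lucas number
by Binet's formula.
-/

open Polynomial

section Fibonacci

variable {R : Type*} [Semiring R] {a b : R}

theorem pow_succ_eq_mul_fib_succ_add_fib (ha : a ^ 2 = a + 1) (n : ℕ) :
    a ^ (n + 1) = a * Nat.fib (n + 1) + Nat.fib n := by
  induction n with
  | zero => simp
  | succ n ih =>
    calc a ^ (n + 1 + 1) = a ^ 2 * Nat.fib (n + 1) + a * Nat.fib n := by
          rw [pow_succ', ih, mul_add, ← mul_assoc, ← sq]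
      _ = a * (Nat.fib n + Nat.fib (n + 1)) + Nat.fib (n + 1) := by
          rw [ha, add_mul, mul_add, one_mul]
          abel
      _ = a * Nat.fib (n + 1 + 1) + Nat.fib (n + 1) := by
          rw [Nat.fib_add_two, Nat.cast_add]

theorem pow_succ_add_pow_succ_eq_fib_add_fib (ha : a ^ 2 = a + 1) (hb : b ^ 2 = b + 1)
    (hab : a + b = 1) (n : ℕ) :
    a ^ (n + 1) + b ^ (n + 1) = Nat.fib n + Nat.fib (n + 2) :=
  calc a ^ (n + 1) + b ^ (n + 1)
      = (a + b) * Nat.fib (n + 1) + (Nat.fib n + Nat.fib n) := by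
        rw [pow_succ_eq_mul_fib_succ_add_fib ha, pow_succ_eq_mul_fib_succ_add_fib hb, add_mul]
        abel
    _ = Nat.fib n + Nat.fib (n + 2) := by
        rw [hab, one_mul, Nat.fib_add_two, Nat.cast_add]
        abel

end Fibonacci

theorem exists_add_eq_and_mul_eq {E : Type*} [Field E] [IsAlgClosed E] (s t : E) :
    ∃ a b : E, a + b = s ∧ a * b = t := by
  obtain ⟨a, ha⟩ := IsAlgClosed.exists_root (X ^ 2 - C s * X + C t) <| by
    have degree_eq_two : (X ^ 2 - C s * X + C t).degree = 2 := by compute_degree!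
    exact degree_eq_two ▸ two_ne_zero
  refine ⟨a, s - a, add_sub_cancel a s, ?_⟩
  simp only [IsRoot.def, eval_add, eval_sub, eval_mul, eval_pow, eval_X, eval_C] at ha
  linear_combination -ha

section Cyclotomic

variable {p : ℕ} {K L E : Type*} [Field K] [Field L] [Algebra K L] [IsCyclotomicExtension {p} K L]
  {ζ : L}

theorem sub_mul_prod_algHom_sub_mul [CommRing E] [IsDomain E] [Algebra K E] [Fintype (L →ₐ[K] E)]
    (hp : p.Prime) (hirr : Irreducible (cyclotomic p K)) (hζ : IsPrimitiveRoot ζ p)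
    {η : E} (hη : IsPrimitiveRoot η p) (x y : E) :
    (x - y) * ∏ σ : L →ₐ[K] E, (x - σ ζ * y) = x ^ p - y ^ p := by
  have : NeZero p := ⟨hp.ne_zero⟩
  have prod_conjugates :
      ∏ σ : L →ₐ[K] E, (x - σ ζ * y) = ∏ ξ ∈ primitiveRoots p E, (x - ξ * y) := by
    rw [← Finset.prod_coe_sort (primitiveRoots p E)]
    exact Fintype.prod_equiv (hζ.embeddingsEquivPrimitiveRoots E hirr) _ _ fun σ => rfl
  have one_notMem : 1 ∉ primitiveRoots p E := fun h =>
    hp.ne_one ((isPrimitiveRoot_of_mem_primitiveRoots h).unique .one)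
  classical
  rw [prod_conjugates, hη.pow_sub_pow_eq_prod_sub_mul x y hp.pos, nthRootsFinset_eq_of_prime hp,
    Finset.union_comm, ← Finset.insert_eq, Finset.prod_insert one_notMem, one_mul]

theorem mul_algebraMap_norm_one_sub_mul_add_mul_sq [Field E] [IsAlgClosed E] [Algebra K E]
    (hp : p.Prime) (hirr : Irreducible (cyclotomic p K)) (hζ : IsPrimitiveRoot ζ p)
    {s t : K} {a b : E} (hs : a + b = algebraMap K E s) (ht : a * b = algebraMap K E t) :
    (1 - a) * (1 - b) *
        algebraMap K E (Algebra.norm K (1 - algebraMap K L s * ζ + algebraMap K L t * ζ ^ 2)) =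
      (1 - a ^ p) * (1 - b ^ p) := by
  have : FiniteDimensional K L := IsCyclotomicExtension.finiteDimensional {p} K L
  have : IsGalois K L := IsCyclotomicExtension.isGalois {p} K L
  have hη : IsPrimitiveRoot ((IsAlgClosed.lift : L →ₐ[K] E) ζ) p :=
    hζ.map_of_injective (RingHom.injective _)
  have factor_conjugate (σ : L →ₐ[K] E) :
      σ (1 - algebraMap K L s * ζ + algebraMap K L t * ζ ^ 2) =
        (1 - σ ζ * a) * (1 - σ ζ * b) := by
    simp only [map_add, map_sub, map_mul, map_pow, map_one, AlgHom.commutes, ← hs, ← ht]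
    ring
  calc _ = ((1 - a) * ∏ σ : L →ₐ[K] E, (1 - σ ζ * a)) *
        ((1 - b) * ∏ σ : L →ₐ[K] E, (1 - σ ζ * b)) := by
        simp only [Algebra.norm_eq_prod_embeddings, factor_conjugate, Finset.prod_mul_distrib]
        ring
    _ = (1 - a ^ p) * (1 - b ^ p) := by
        simp only [sub_mul_prod_algHom_sub_mul hp hirr hζ hη, one_pow]

theorem norm_one_sub_zeta_sub_zeta_sq_eq_lucas_general (hp : p.Prime) (hodd : Odd p)
    (hirr : Irreducible (cyclotomic p K)) (hζ : IsPrimitiveRoot ζ p) :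
    Algebra.norm K (1 - ζ - ζ ^ 2) = (Nat.fib (p - 1) + Nat.fib (p + 1) : K) := by
  obtain ⟨a, b, hsum, hprod⟩ := exists_add_eq_and_mul_eq (1 : AlgebraicClosure K) (-1)
  have ha : a ^ 2 = a + 1 := by linear_combination a * hsum - hprod
  have hb : b ^ 2 = b + 1 := by linear_combination b * hsum - hprod
  have lucas : a ^ p + b ^ p = Nat.fib (p - 1) + Nat.fib (p + 1) := by
    obtain ⟨n, rfl⟩ := Nat.exists_eq_add_one_of_ne_zero hp.ne_zero
    exact pow_succ_add_pow_succ_eq_fib_add_fib ha hb hsum n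
  have pow_mul_pow : a ^ p * b ^ p = -1 := by rw [← mul_pow, hprod, hodd.neg_one_pow]
  have coeff_eq : (1 - a) * (1 - b) = -1 := by linear_combination hprod - hsum
  have norm_eq := mul_algebraMap_norm_one_sub_mul_add_mul_sq hp hirr hζ (s := 1) (t := -1)
    (by rw [hsum, map_one]) (by rw [hprod, map_neg, map_one])
  simp only [coeff_eq, map_neg, map_one, one_mul, neg_one_mul, ← sub_eq_add_neg] at norm_eq
  apply (algebraMap K (AlgebraicClosure K)).injective
  rw [map_add, map_natCast, map_natCast]
  linear_combination lucas - pow_mul_pow - norm_eq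

end Cyclotomic

/-- Let `p` be an odd prime and `ζ` a primitive `p`-th root of unity in the
`p`-th cyclotomic field over `ℚ`.  Then `N_{ℚ(ζ)/ℚ}(1 - ζ - ζ^2) = L(p)`,
the `p`-th Lucas number, where `L(n) = F(n-1) + F(n+1)`. -/
theorem norm_one_sub_zeta_sub_zeta_sq_eq_lucas (p : ℕ) (hp : p.Prime) (hodd : Odd p)
    (ζ : CyclotomicField p ℚ) (hζ : IsPrimitiveRoot ζ p) :
    Algebra.norm ℚ (1 - ζ - ζ ^ 2) = (Nat.fib (p - 1) + Nat.fib (p + 1) : ℚ) :=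
  have : NeZero p := ⟨hp.ne_zero⟩
  have : IsCyclotomicExtension {p} ℚ (CyclotomicField p ℚ) :=
    CyclotomicField.isCyclotomicExtension p ℚ
  norm_one_sub_zeta_sub_zeta_sq_eq_lucas_general hp hodd (cyclotomic.irreducible_rat hp.pos) hζ
end

section
/- Let p be an odd prime and let ζ = exp(2πi/p) ∈ ℂ. Then the product over k = 1 to p−1 of (1 + ζ^k − ζ^{2k}) equals the p-th Lucas number L(p). -/
/-!
If `a` is a root of `X ^ 2 - X - 1`, then so is `1 - a`, and
`1 + z - z ^ 2 = -((a - z) * (1 - a - z))`. As `z` runs over the `n`-th roots of unity, the two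
factors multiply to `a ^ n - 1` and `(1 - a) ^ n - 1`. Since `a * (1 - a) = -1`, the product of
these depends on `a` only through the power sum `a ^ n + (1 - a) ^ n`, which is `L(n)`. A domain
need not contain such an `a`, but the resulting identity can be checked in an algebraic closure
of its fraction field.
-/

theorem pow_succ_eq_fib_mul_add_fib {R : Type*} [Semiring R] {a : R} (ha : a ^ 2 = a + 1) (n : ℕ) :
    a ^ (n + 1) = Nat.fib (n + 1) * a + Nat.fib n := by
  induction n with
  | zero => simp
  | succ n ih =>
    calc a ^ (n + 2) = (Nat.fib (n + 1) * a + Nat.fib n) * a := by rw [pow_succ, ih]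
      _ = Nat.fib (n + 1) * (a + 1) + Nat.fib n * a := by rw [add_mul, mul_assoc, ← sq, ha]
      _ = Nat.fib (n + 2) * a + Nat.fib (n + 1) := by
        rw [Nat.fib_add_two, Nat.cast_add, add_mul, mul_add, mul_one]
        abel

theorem pow_succ_add_one_sub_pow_succ_eq_lucas {R : Type*} [Ring R] {a : R}
    (ha : a ^ 2 = a + 1) (n : ℕ) :
    a ^ (n + 1) + (1 - a) ^ (n + 1) = Nat.fib n + Nat.fib (n + 2) := by
  have hconj : (1 - a) ^ 2 = 1 - a + 1 := by
    rw [sq, sub_mul, one_mul, mul_sub, mul_one, ← sq, ha]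
    abel
  rw [pow_succ_eq_fib_mul_add_fib ha, pow_succ_eq_fib_mul_add_fib hconj, Nat.fib_add_two,
    Nat.cast_add, mul_sub, mul_one]
  abel

theorem prod_range_sub_primitiveRoot_pow {R : Type*} [CommRing R] [IsDomain R] {ζ : R} {n : ℕ}
    (hζ : IsPrimitiveRoot ζ n) (hn : 0 < n) (x : R) :
    ∏ k ∈ Finset.range n, (x - ζ ^ k) = x ^ n - 1 := by
  simpa [Polynomial.eval_prod] using
    (congrArg (Polynomial.eval x) (X_pow_sub_C_eq_prod hζ hn (one_pow n))).symm

theorem prod_range_one_add_primitiveRoot_pow_sub_sq {R : Type*} [CommRing R] [IsDomain R]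
    {ζ a : R} {n : ℕ} (hζ : IsPrimitiveRoot ζ n) (hn : 0 < n) (ha : a ^ 2 = a + 1) :
    ∏ k ∈ Finset.range n, (1 + ζ ^ k - ζ ^ (2 * k)) =
      1 + (-1) ^ n * (1 - (a ^ n + (1 - a) ^ n)) := by
  have hfactor (k : ℕ) : 1 + ζ ^ k - ζ ^ (2 * k) = -1 * ((a - ζ ^ k) * (1 - a - ζ ^ k)) := by
    linear_combination -ha
  have hmul : a ^ n * (1 - a) ^ n = (-1) ^ n := by
    rw [← mul_pow]
    congr 1
    linear_combination -ha
  have hsign : (-1 : R) ^ n * (-1) ^ n = 1 := by simp [← mul_pow]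
  calc ∏ k ∈ Finset.range n, (1 + ζ ^ k - ζ ^ (2 * k))
      = (-1) ^ n * ((a ^ n - 1) * ((1 - a) ^ n - 1)) := by
        simp_rw [hfactor, Finset.prod_mul_distrib, prod_range_sub_primitiveRoot_pow hζ hn,
          Finset.prod_const, Finset.card_range]
    _ = 1 + (-1) ^ n * (1 - (a ^ n + (1 - a) ^ n)) := by
        linear_combination (-1) ^ n * hmul + hsign

theorem exists_sq_eq_add_one (K : Type*) [Field K] [IsAlgClosed K] : ∃ a : K, a ^ 2 = a + 1 := by
  have hdeg : (Polynomial.X ^ 2 - Polynomial.X - 1 : Polynomial K).degree = 2 := by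
    compute_degree!
  obtain ⟨a, ha⟩ := IsAlgClosed.exists_root _ (hdeg.trans_ne two_ne_zero)
  refine ⟨a, ?_⟩
  simp only [Polynomial.IsRoot, Polynomial.eval_sub, Polynomial.eval_pow, Polynomial.eval_X,
    Polynomial.eval_one] at ha
  linear_combination ha

theorem prod_one_add_zeta_sub_zeta_sq_eq_lucas_general {R : Type*} [CommRing R] [IsDomain R]
    {ζ : R} {n : ℕ} (hζ : IsPrimitiveRoot ζ n) (hn : 0 < n) :
    ∏ k ∈ Finset.Icc 1 (n - 1), (1 + ζ ^ k - ζ ^ (2 * k)) =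
      1 + (-1) ^ n * (1 - (Nat.fib (n - 1) + Nat.fib (n + 1) : R)) := by
  let F := FractionRing R
  let K := AlgebraicClosure F
  let ι : R →+* K := (algebraMap F K).comp (algebraMap R F)
  have hι : Function.Injective ι :=
    (algebraMap F K).injective.comp (IsFractionRing.injective R F)
  obtain ⟨a, ha⟩ := exists_sq_eq_add_one K
  obtain ⟨m, rfl⟩ := Nat.exists_eq_add_one.mpr hn
  have hrange : ∏ k ∈ Finset.Icc 1 m, (1 + ζ ^ k - ζ ^ (2 * k)) =
      ∏ k ∈ Finset.range (m + 1), (1 + ζ ^ k - ζ ^ (2 * k)) := by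
    rw [Finset.prod_range_eq_mul_Ico _ hn, Finset.Ico_add_one_right_eq_Icc]
    simp
  rw [Nat.add_sub_cancel, hrange]
  apply hι
  simpa [pow_succ_add_one_sub_pow_succ_eq_lucas ha] using
    prod_range_one_add_primitiveRoot_pow_sub_sq (hζ.map_of_injective hι) hn ha

/-- Let `p` be an odd prime and `ζ = exp(2πi/p)`.  Then
`∏_{k=1}^{p-1} (1 + ζ^k - ζ^{2k}) = L(p)`, the `p`-th Lucas number,
where `L(n) = F(n-1) + F(n+1)`. -/
theorem prod_one_add_zeta_sub_zeta_sq_eq_lucas (p : ℕ) (hp : p.Prime) (hodd : Odd p)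
    (ζ : ℂ) (hζ : ζ = Complex.exp (2 * Real.pi * Complex.I / p)) :
    ∏ k ∈ Finset.Icc 1 (p - 1), (1 + ζ ^ k - ζ ^ (2 * k))
      = (Nat.fib (p - 1) + Nat.fib (p + 1) : ℂ) := by
  have hprim : IsPrimitiveRoot ζ p := hζ ▸ Complex.isPrimitiveRoot_exp p hp.ne_zero
  simpa [hodd.neg_one_pow] using prod_one_add_zeta_sub_zeta_sq_eq_lucas_general hprim hp.pos
end
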